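/- Let n ≥ 2, θ > 0, and let X_1,…,X_n be i.i.d. Uniform[0,θ] random variables. Then m = (n+1)/(2n) is a median of the mean/max statistic τ_n = X̄_n / X_(n), i.e. P(τ_n ≤ m) = 1/2 = P(τ_n ≥ m). -/

import Mathlib

open MeasureTheory ProbabilityTheory

/-- The uniform probability measure on `[0, θ]`. -/
noncomputable def uniformMeasure (θ : ℝ) : Measure ℝ :=
  ENNReal.ofReal θ⁻¹ • volume.restrict (Set.Icc 0 θ)

/-- The joint law of an i.i.d. sample of size `n` from `Uniform[0, θ]`. -/
noncomputable def iidUniform (n : ℕ) (θ : ℝ) : Measure (Fin n → ℝ) :=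
  Measure.pi fun _ => uniformMeasure θ

/-- Sample maximum. -/
noncomputable def sampleMax {n : ℕ} (x : Fin n → ℝ) : ℝ := ⨆ i, x i

/-- Empirical mean. -/
noncomputable def sampleMean {n : ℕ} (x : Fin n → ℝ) : ℝ := (∑ i, x i) / n

/-- The mean/max statistic `τ_n`. -/
noncomputable def tau {n : ℕ} (x : Fin n → ℝ) : ℝ := sampleMean x / sampleMax x

/-!
On the event that `x i` is the maximum of the sample, the linear map `reflectBelow i`, which fixes
`x i` and replaces every other entry `x j` by `x i - x j`, is a volume-preserving involution. It
keeps the maximum and turns the mean `x̄` into `(n + 1) / n * x i - x̄`, hence `τ` into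
`(n + 1) / n - τ`. Summing over `i`, the law of `τ` is symmetric about `(n + 1) / (2 * n)`. For
`n ≥ 2` it has no atoms, because `τ x = t` forces `x` into one of finitely many hyperplanes, and the
center of symmetry of an atomless law is a median.
-/

section Symmetric

variable {Ω : Type*} [MeasurableSpace Ω] {P : Measure Ω} {X : Ω → ℝ} {m : ℝ}

theorem measure_le_eq_measure_ge_of_symmetric
    (hsymm : IdentDistrib X (fun ω => 2 * m - X ω) P P) :
    P {ω | X ω ≤ m} = P {ω | m ≤ X ω} := by
  have hreflect : {ω | m ≤ X ω} = (fun ω => 2 * m - X ω) ⁻¹' Set.Iic m := by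
    ext ω
    simp only [Set.mem_ofPred_eq, Set.mem_preimage, Set.mem_Iic]
    constructor <;> intro h <;> linarith
  rw [hreflect]
  exact hsymm.measure_mem_eq measurableSet_Iic

theorem measure_le_and_measure_ge_eq_half_of_symmetric [IsProbabilityMeasure P]
    (hsymm : IdentDistrib X (fun ω => 2 * m - X ω) P P) (hm : ∀ᵐ ω ∂P, X ω ≠ m) :
    P {ω | X ω ≤ m} = 1 / 2 ∧ P {ω | m ≤ X ω} = 1 / 2 := by
  have heq := measure_le_eq_measure_ge_of_symmetric hsymm
  have hle : NullMeasurableSet {ω | X ω ≤ m} P :=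
    hsymm.aemeasurable_fst.nullMeasurable measurableSet_Iic
  have hcompl : P {ω | X ω ≤ m}ᶜ = P {ω | m ≤ X ω} := by
    refine measure_congr (Filter.eventuallyEq_set.mpr ?_)
    filter_upwards [hm] with ω hω
    rw [Set.mem_compl_iff, Set.mem_ofPred_eq, not_le]
    exact ⟨le_of_lt, fun h => h.lt_of_ne hω.symm⟩
  have hadd := measure_add_measure_compl₀ hle
  rw [hcompl, heq, ← two_mul, measure_univ] at hadd
  have hhalf : P {ω | m ≤ X ω} = 1 / 2 := by
    rw [ENNReal.eq_div_iff two_ne_zero ENNReal.ofNat_ne_top, hadd]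
  exact ⟨heq.trans hhalf, hhalf⟩

end Symmetric

section AddHaar

variable {E F : Type*} [NormedAddCommGroup E] [NormedSpace ℝ E] [MeasurableSpace E] [BorelSpace E]
  [FiniteDimensional ℝ E] [AddCommGroup F] [Module ℝ F] (μ : Measure E) [μ.IsAddHaarMeasure]

theorem ae_linearMap_ne_zero {f : E →ₗ[ℝ] F} (hf : f ≠ 0) : ∀ᵐ x ∂μ, f x ≠ 0 := by
  have hker : μ (LinearMap.ker f) = 0 :=
    Measure.addHaar_submodule μ _ (LinearMap.ker_eq_top.not.mpr hf)
  filter_upwards [measure_eq_zero_iff_ae_notMem.mp hker] with x hx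
  simpa using hx

theorem measurePreserving_of_involutive_linearMap {f : E →ₗ[ℝ] E} (hf : Function.Involutive f) :
    MeasurePreserving f μ μ := by
  have hdet : LinearMap.det f * LinearMap.det f = 1 := by
    rw [← LinearMap.det_comp, LinearMap.ext (f := f ∘ₗ f) (g := LinearMap.id) hf, LinearMap.det_id]
  have habs : |(LinearMap.det f)⁻¹| = 1 := by
    rcases mul_self_eq_one_iff.mp hdet with h | h <;> simp [h]
  refine ⟨f.continuous_of_finiteDimensional.measurable, ?_⟩
  rw [Measure.map_linearMap_addHaar_eq_smul_addHaar μ (left_ne_zero_of_mul_eq_one hdet), habs,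
    ENNReal.ofReal_one, one_smul]

end AddHaar

section MaxAt

variable {ι : Type*}

/-- The samples in `[0, θ]` whose `i`-th entry is a positive maximum. Positivity keeps `τ x` away
from the junk value `0 / 0`. -/
def maxAt (θ : ℝ) (i : ι) : Set (ι → ℝ) :=
  {x | 0 < x i ∧ x i ≤ θ ∧ ∀ j, 0 ≤ x j ∧ x j ≤ x i}

theorem maxAt_subset_cube (θ : ℝ) (i : ι) :
    maxAt θ i ⊆ Set.univ.pi fun _ => Set.Icc 0 θ :=
  fun _ ⟨_, hθ, hx⟩ j _ => ⟨(hx j).1, (hx j).2.trans hθ⟩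

theorem measurableSet_maxAt [Countable ι] (θ : ℝ) (i : ι) : MeasurableSet (maxAt θ i) := by
  unfold maxAt
  measurability

theorem aedisjoint_maxAt [Fintype ι] (θ : ℝ) :
    Pairwise (Function.onFun (AEDisjoint volume) (maxAt (ι := ι) θ)) := by
  classical
  intro i j hij
  have hproj : (LinearMap.proj i : (ι → ℝ) →ₗ[ℝ] ℝ) - LinearMap.proj j ≠ 0 := fun h => by
    simpa [hij.symm] using LinearMap.congr_fun h (Pi.single i 1)
  refine measure_eq_zero_iff_ae_notMem.mpr ?_
  filter_upwards [ae_linearMap_ne_zero volume hproj] with x hne ⟨hi, hj⟩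
  exact hne <| sub_eq_zero.mpr (le_antisymm (hj.2.2 i).2 (hi.2.2 j).2)

theorem iUnion_maxAt_ae_eq_cube [Fintype ι] [Nonempty ι] (θ : ℝ) :
    (⋃ i, maxAt θ i) =ᵐ[volume] (Set.univ.pi fun _ : ι => Set.Icc 0 θ) := by
  have hne : ∀ᵐ x : ι → ℝ, ∀ i, x i ≠ 0 :=
    ae_all_iff.mpr fun i => Measure.ae_eval_ne (fun _ => volume) i 0
  rw [Filter.eventuallyEq_set]
  filter_upwards [hne] with x hx
  refine ⟨fun h => Set.iUnion_subset (maxAt_subset_cube θ) h, fun h => ?_⟩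
  obtain ⟨i, hi⟩ := Finite.exists_max x
  have hcube (j : ι) : x j ∈ Set.Icc 0 θ := h j (Set.mem_univ j)
  exact Set.mem_iUnion.mpr
    ⟨i, (hcube i).1.lt_of_ne (hx i).symm, (hcube i).2, fun j => ⟨(hcube j).1, hi j⟩⟩

theorem restrict_cube_eq_sum_restrict_maxAt [Fintype ι] [Nonempty ι] (θ : ℝ) :
    volume.restrict (Set.univ.pi fun _ : ι => Set.Icc 0 θ) =
      Measure.sum fun i => volume.restrict (maxAt θ i) := by
  rw [← Measure.restrict_congr_set (iUnion_maxAt_ae_eq_cube θ),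
    Measure.restrict_iUnion_ae (aedisjoint_maxAt θ)
      fun i => (measurableSet_maxAt θ i).nullMeasurableSet]

end MaxAt

section ReflectBelow

variable {ι : Type*} [DecidableEq ι] {θ : ℝ} {i : ι} {x : ι → ℝ}

/-- The linear map fixing the `i`-th coordinate and replacing every other coordinate `x j` by
`x i - x j`, its reflection in the midpoint of `[0, x i]`. -/
def reflectBelow (i : ι) : (ι → ℝ) →ₗ[ℝ] (ι → ℝ) where
  toFun x := Function.update (fun j => x i - x j) i (x i)
  map_add' x y := by
    ext j
    by_cases h : j = i <;> simp [h, add_sub_add_comm]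
  map_smul' c x := by
    ext j
    by_cases h : j = i <;> simp [h, mul_sub]

theorem reflectBelow_apply (i j : ι) (x : ι → ℝ) :
    reflectBelow i x j = if j = i then x i else x i - x j :=
  Function.update_apply (fun j => x i - x j) i (x i) j

theorem reflectBelow_apply_self (i : ι) (x : ι → ℝ) : reflectBelow i x i = x i := by
  rw [reflectBelow_apply, if_pos rfl]

theorem involutive_reflectBelow (i : ι) : Function.Involutive (reflectBelow i) := fun x => by
  ext j
  by_cases h : j = i <;> simp [reflectBelow_apply, h]

theorem sum_reflectBelow [Fintype ι] (i : ι) (x : ι → ℝ) :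
    ∑ j, reflectBelow i x j = (Fintype.card ι + 1) * x i - ∑ j, x j := by
  have hsplit (j : ι) : reflectBelow i x j = (x i - x j) + if j = i then x i else 0 := by
    by_cases h : j = i <;> simp [reflectBelow_apply, h]
  simp only [hsplit, Finset.sum_add_distrib, Finset.sum_sub_distrib, Finset.sum_const,
    Finset.card_univ, nsmul_eq_mul, Finset.sum_ite_eq', Finset.mem_univ, if_true]
  ring

theorem reflectBelow_mem_maxAt (hx : x ∈ maxAt θ i) : reflectBelow i x ∈ maxAt θ i := by
  obtain ⟨hpos, hθ, hmax⟩ := hx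
  simp only [maxAt, Set.mem_ofPred_eq, reflectBelow_apply_self]
  refine ⟨hpos, hθ, fun j => ?_⟩
  rw [reflectBelow_apply]
  split_ifs
  · exact ⟨hpos.le, le_rfl⟩
  · exact ⟨sub_nonneg.mpr (hmax j).2, sub_le_self _ (hmax j).1⟩

theorem reflectBelow_preimage_maxAt (θ : ℝ) (i : ι) :
    reflectBelow i ⁻¹' maxAt θ i = maxAt θ i := by
  refine Set.Subset.antisymm (fun x hx => ?_) fun x => reflectBelow_mem_maxAt
  simpa only [involutive_reflectBelow i x] using reflectBelow_mem_maxAt hx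

theorem measurePreserving_reflectBelow_maxAt [Fintype ι] (θ : ℝ) (i : ι) :
    MeasurePreserving (reflectBelow i) (volume.restrict (maxAt θ i))
      (volume.restrict (maxAt θ i)) := by
  simpa only [reflectBelow_preimage_maxAt] using
    (measurePreserving_of_involutive_linearMap volume
      (involutive_reflectBelow i)).restrict_preimage (measurableSet_maxAt θ i)

end ReflectBelow

section Tau

variable {n : ℕ} {θ : ℝ} {i : Fin n} {x : Fin n → ℝ}

theorem measurable_tau : Measurable (tau : (Fin n → ℝ) → ℝ) := by
  unfold tau sampleMean sampleMax
  exact Measurable.div (by fun_prop) (Measurable.iSup fun i => measurable_pi_apply i)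

theorem sampleMax_eq_of_mem_maxAt (hx : x ∈ maxAt θ i) : sampleMax x = x i :=
  have : Nonempty (Fin n) := ⟨i⟩
  le_antisymm (ciSup_le fun j => (hx.2.2 j).2) (le_ciSup (Set.finite_range x).bddAbove i)

theorem sampleMean_reflectBelow (i : Fin n) (x : Fin n → ℝ) :
    sampleMean (reflectBelow i x) = ((n : ℝ) + 1) / n * x i - sampleMean x := by
  rw [sampleMean, sampleMean, sum_reflectBelow, Fintype.card_fin]
  ring

theorem tau_reflectBelow (hx : x ∈ maxAt θ i) :
    tau (reflectBelow i x) = ((n : ℝ) + 1) / n - tau x := by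
  rw [tau, tau, sampleMax_eq_of_mem_maxAt (reflectBelow_mem_maxAt hx),
    sampleMax_eq_of_mem_maxAt hx, reflectBelow_apply_self, sampleMean_reflectBelow, sub_div,
    mul_div_cancel_right₀ _ hx.1.ne']

theorem map_tau_restrict_maxAt_eq_map_const_sub_tau (θ : ℝ) (i : Fin n) :
    (volume.restrict (maxAt θ i)).map tau =
      (volume.restrict (maxAt θ i)).map fun x => ((n : ℝ) + 1) / n - tau x := by
  have hreflect : tau ∘ reflectBelow i =ᵐ[volume.restrict (maxAt θ i)]
      fun x => ((n : ℝ) + 1) / n - tau x := by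
    filter_upwards [ae_restrict_mem (measurableSet_maxAt θ i)] with x hx
    exact tau_reflectBelow hx
  have hpres := measurePreserving_reflectBelow_maxAt θ i
  rw [← Measure.map_congr hreflect, ← Measure.map_map measurable_tau hpres.measurable, hpres.map_eq]

theorem ae_restrict_maxAt_tau_ne (hn : 2 ≤ n) (θ t : ℝ) (i : Fin n) :
    ∀ᵐ x ∂volume.restrict (maxAt θ i), tau x ≠ t := by
  have : Nontrivial (Fin n) := Fin.nontrivial_iff_two_le.mpr hn
  obtain ⟨k, hk⟩ := exists_ne i
  let hyperplane : (Fin n → ℝ) →ₗ[ℝ] ℝ := ∑ j, LinearMap.proj j - (t * n) • LinearMap.proj i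
  have hhyperplane : hyperplane ≠ 0 := fun h => by
    simpa [hyperplane, hk.symm] using LinearMap.congr_fun h (Pi.single k 1)
  filter_upwards [ae_restrict_mem (measurableSet_maxAt θ i),
    ae_restrict_of_ae (ae_linearMap_ne_zero volume hhyperplane)] with x hx hne htau
  have hn0 : (n : ℝ) ≠ 0 := Nat.cast_ne_zero.mpr i.pos.ne'
  rw [tau, sampleMean, sampleMax_eq_of_mem_maxAt hx, div_div,
    div_eq_iff (mul_ne_zero hn0 hx.1.ne'), ← mul_assoc] at htau
  exact hne (by simp [hyperplane, htau])

end Tau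

section IidUniform

variable {n : ℕ} {θ : ℝ}

theorem isProbabilityMeasure_uniformMeasure (hθ : 0 < θ) :
    IsProbabilityMeasure (uniformMeasure θ) :=
  ⟨by simp [uniformMeasure, ← ENNReal.ofReal_mul (inv_nonneg.mpr hθ.le), hθ.ne']⟩

theorem isProbabilityMeasure_iidUniform (n : ℕ) (hθ : 0 < θ) :
    IsProbabilityMeasure (iidUniform n θ) := by
  have := isProbabilityMeasure_uniformMeasure hθ
  unfold iidUniform
  infer_instance

theorem iidUniform_eq_smul_restrict_cube (n : ℕ) (θ : ℝ) :
    iidUniform n θ = ENNReal.ofReal θ⁻¹ ^ n •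
      volume.restrict (Set.univ.pi fun _ : Fin n => Set.Icc 0 θ) := by
  have : IsFiniteMeasure (uniformMeasure θ) := Measure.smul_finite _ ENNReal.ofReal_ne_top
  refine Measure.pi_eq fun s _ => ?_
  rw [volume_pi, Measure.restrict_pi_pi]
  simp [uniformMeasure, Finset.prod_mul_distrib, Measure.pi_pi]

theorem iidUniform_eq_smul_sum_restrict_maxAt [NeZero n] (θ : ℝ) :
    iidUniform n θ =
      ENNReal.ofReal θ⁻¹ ^ n • Measure.sum fun i : Fin n => volume.restrict (maxAt θ i) := by
  rw [iidUniform_eq_smul_restrict_cube, restrict_cube_eq_sum_restrict_maxAt]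

theorem identDistrib_tau_const_sub_tau [NeZero n] (θ : ℝ) :
    IdentDistrib tau (fun x => ((n : ℝ) + 1) / n - tau x) (iidUniform n θ) (iidUniform n θ) := by
  have hsub : Measurable fun x : Fin n → ℝ => ((n : ℝ) + 1) / n - tau x :=
    measurable_tau.const_sub _
  refine ⟨measurable_tau.aemeasurable, hsub.aemeasurable, ?_⟩
  simp only [iidUniform_eq_smul_sum_restrict_maxAt, Measure.map_smul,
    Measure.map_sum measurable_tau.aemeasurable, Measure.map_sum hsub.aemeasurable,
    map_tau_restrict_maxAt_eq_map_const_sub_tau]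

theorem ae_iidUniform_tau_ne (hn : 2 ≤ n) (θ t : ℝ) : ∀ᵐ x ∂iidUniform n θ, tau x ≠ t := by
  have : NeZero n := ⟨by lia⟩
  rw [iidUniform_eq_smul_sum_restrict_maxAt]
  exact Measure.ae_smul_measure (Measure.ae_sum_iff.mpr (ae_restrict_maxAt_tau_ne hn θ t)) _

end IidUniform

/-- Under an i.i.d. `Uniform[0,θ]` sample, `(n+1)/(2n)` is a median of `τ_n`:
`P(τ_n ≤ m) = 1/2 = P(τ_n ≥ m)`. -/
theorem tau_median_uniform
    (n : ℕ) (hn : 2 ≤ n) (θ : ℝ) (hθ : 0 < θ) :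
    iidUniform n θ {x | tau x ≤ ((n : ℝ) + 1) / (2 * n)} = 1 / 2 ∧
    iidUniform n θ {x | ((n : ℝ) + 1) / (2 * n) ≤ tau x} = 1 / 2 := by
  have : NeZero n := ⟨by lia⟩
  have := isProbabilityMeasure_iidUniform n hθ
  have hcenter : ((n : ℝ) + 1) / n = 2 * (((n : ℝ) + 1) / (2 * n)) := by
    field_simp
  have hsymm := identDistrib_tau_const_sub_tau (n := n) θ
  rw [hcenter] at hsymm
  exact measure_le_and_measure_ge_eq_half_of_symmetric hsymm (ae_iidUniform_tau_ne hn θ _)
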